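/- arXiv:1901.07530 — 3 statements merged into one kernel-verified Lean document; each statement's English description precedes it below -/
import Mathlib

section
/- For any pair of distributions p, q ∈ P_n, it holds that half(p ∧ q) ≼ half(p) ∧ half(q). -/
/-! On prefix sums, `∧` is the pointwise minimum (the definition of `glbVec` telescopes), and
`half` is averaging: the `i`-th prefix sum of `half p` is `(P ⌊i/2⌋ + P ⌈i/2⌉) / 2`, where `P`
denotes the prefix sums of `p`. The claim is therefore the superadditivity of `min`,
`min a b + min c d ≤ min (a + c) (b + d)`. -/

open Finset

/-- Sum of the first `i` components (0-indexed) of a vector; for `i ≥ n` this is the total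
sum, which implements zero padding. -/
noncomputable def prefSum {n : ℕ} (p : Fin n → ℝ) (i : ℕ) : ℝ :=
  ∑ k : Fin n, if (k : ℕ) < i then p k else 0

/-- Membership in `P_n`: sorted non-increasingly, nonnegative components, summing to 1. -/
def IsProbVec {n : ℕ} (p : Fin n → ℝ) : Prop :=
  (∀ i j : Fin n, i ≤ j → p j ≤ p i) ∧ (∀ i, 0 ≤ p i) ∧ (∑ i, p i) = 1

/-- Majorization `p ≼ q` (the shorter vector being padded with zeros). -/
def Maj {n m : ℕ} (p : Fin n → ℝ) (q : Fin m → ℝ) : Prop :=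
  ∀ i : ℕ, prefSum p i ≤ prefSum q i
/-- The greatest lower bound `p ∧ q` in the majorization lattice `(P_n, ≼)`:
`z₁ = min (p₁, q₁)` and `zᵢ = min (∑_{j≤i} pⱼ, ∑_{j≤i} qⱼ) − ∑_{j<i} zⱼ`, i.e. its prefix
sums are the minima of the corresponding prefix sums of `p` and `q`. -/
noncomputable def glbVec {n : ℕ} (p q : Fin n → ℝ) : Fin n → ℝ :=
  fun i => min (prefSum p ((i : ℕ) + 1)) (prefSum q ((i : ℕ) + 1)) -
    min (prefSum p (i : ℕ)) (prefSum q (i : ℕ))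
/-- The operator `half`: `half(p) = (p₁/2, p₁/2, p₂/2, p₂/2, …, p_n/2, p_n/2) ∈ P_{2n}`. -/
noncomputable def halfVec {n : ℕ} (p : Fin n → ℝ) : Fin (2 * n) → ℝ :=
  fun i => p ⟨(i : ℕ) / 2, by have := i.isLt; omega⟩ / 2

lemma prefSum_zero {n : ℕ} (p : Fin n → ℝ) : prefSum p 0 = 0 := by
  simp [prefSum]

lemma prefSum_succ {n : ℕ} (p : Fin n → ℝ) (i : ℕ) :
    prefSum p (i + 1) = prefSum p i + if h : i < n then p ⟨i, h⟩ else 0 := by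
  have hlast : (if h : i < n then p ⟨i, h⟩ else 0) =
      ∑ k : Fin n, if (k : ℕ) = i then p k else 0 := by
    split_ifs with h
    · rw [Finset.sum_eq_single (⟨i, h⟩ : Fin n)]
      · simp
      · intro b _ hb
        exact if_neg fun hbi => hb (Fin.ext hbi)
      · simp
    · refine (Finset.sum_eq_zero fun k _ => if_neg ?_).symm
      have := k.isLt
      omega
  rw [hlast, prefSum, prefSum, ← Finset.sum_add_distrib]
  refine Finset.sum_congr rfl fun k _ => ?_
  rcases lt_trichotomy (k : ℕ) i with h | h | h
  · simp [h, h.ne, Nat.lt_succ_of_lt h]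
  · simp [h]
  · simp [h.ne', not_lt.mpr h.le, not_lt.mpr (Nat.succ_le_of_lt h)]

lemma prefSum_glbVec {n : ℕ} (p q : Fin n → ℝ) (i : ℕ) :
    prefSum (glbVec p q) i = min (prefSum p i) (prefSum q i) := by
  induction i with
  | zero => simp [prefSum_zero]
  | succ i ih =>
    rw [prefSum_succ, ih]
    by_cases h : i < n
    · simp [h, glbVec]
    · simp [prefSum_succ, h]

lemma prefSum_halfVec {n : ℕ} (p : Fin n → ℝ) (i : ℕ) :
    prefSum (halfVec p) i = (prefSum p (i / 2) + prefSum p ((i + 1) / 2)) / 2 := by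
  induction i with
  | zero => simp [prefSum_zero]
  | succ i ih =>
    rw [prefSum_succ, ih, show (i + 1 + 1) / 2 = i / 2 + 1 by omega, prefSum_succ p (i / 2)]
    by_cases h : i < 2 * n
    · have h' : i / 2 < n := by omega
      simp only [h, h', dite_true, halfVec]
      ring
    · have h' : ¬ i / 2 < n := by omega
      simp only [h, h', dite_false]
      ring

/-- for any `p, q ∈ P_n`, `half(p ∧ q) ≼ half(p) ∧ half(q)`. -/
theorem half_glb_maj {n : ℕ} (p q : Fin n → ℝ)
    (hp : IsProbVec p) (hq : IsProbVec q) :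
    Maj (halfVec (glbVec p q)) (glbVec (halfVec p) (halfVec q)) := by
  intro i
  rw [prefSum_halfVec, prefSum_glbVec, prefSum_glbVec, prefSum_glbVec, prefSum_halfVec,
    prefSum_halfVec, le_min_iff]
  constructor
  · gcongr <;> exact min_le_left _ _
  · gcongr <;> exact min_le_right _ _
end

section
/- Let z = (z_1,…,z_n) ∈ P_n and let m be a probability vector whose components can be partitioned into n groups M_1,…,M_n, each of size at most 2, such that the components of M_j sum to z_j for every j. Then half(z) ≼ m. -/
/-! For a non-increasing nonnegative vector `m`, the prefix sums satisfy the variational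
formula `prefSum m i = min_t (i * t + ∑ k, (m k - t)⁺)` over `t ≥ 0`, and for every vector the right side
is an upper bound for the left (`prefSum_le`, `exists_prefSum_eq`). It therefore suffices to show
`∑ k, (half(z) k - t)⁺ ≤ ∑ k, (m k - t)⁺` for each `t ≥ 0`. The left side is `∑ j, (z j - 2 t)⁺`
since each `z j / 2` occurs twice, and a group with at most two members summing to `z j` has
`(z j - 2 t)⁺ ≤ ∑ (m k - t)⁺`. -/


open Finset

lemma prefSum_le {n : ℕ} (p : Fin n → ℝ) (i : ℕ) {t : ℝ} (ht : 0 ≤ t) :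
    prefSum p i ≤ i * t + ∑ k, max (p k - t) 0 := by
  have hc : ∑ k : Fin n, (if (k : ℕ) < i then t else 0) ≤ i * t := by
    rw [Fin.sum_univ_eq_sum_range (fun k => if k < i then t else 0) n, ← Finset.sum_filter,
      Finset.sum_const, nsmul_eq_mul]
    have hle : ((Finset.range n).filter (fun k => k < i)).card ≤ i := by
      calc _ ≤ (Finset.range i).card := Finset.card_le_card (by intro k; simp)
        _ = i := Finset.card_range i
    gcongr
  have hs : prefSum p i ≤
      ∑ k : Fin n, ((if (k : ℕ) < i then t else 0) + max (p k - t) 0) := by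
    refine Finset.sum_le_sum fun k _ => ?_
    split_ifs
    · linarith [le_max_left (p k - t) 0]
    · linarith [le_max_right (p k - t) 0]
  rw [Finset.sum_add_distrib] at hs
  linarith

/-- The bound of `prefSum_le` is attained on probability vectors: at `t = m i` when the component
exists, and at `t = 0` when the prefix is the whole vector. -/
lemma exists_prefSum_eq {N : ℕ} (m : Fin N → ℝ) (hm : IsProbVec m) (i : ℕ) :
    ∃ t : ℝ, 0 ≤ t ∧ i * t + ∑ k, max (m k - t) 0 = prefSum m i := by
  obtain ⟨hmono, hnn, -⟩ := hm
  by_cases hi : i < N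
  · refine ⟨m ⟨i, hi⟩, hnn _, ?_⟩
    set t := m ⟨i, hi⟩ with ht
    have hc : ∑ k : Fin N, (if (k : ℕ) < i then t else 0) = i * t := by
      rw [Fin.sum_univ_eq_sum_range (fun k => if k < i then t else 0) N, ← Finset.sum_filter,
        Finset.sum_const, nsmul_eq_mul]
      have hset : (Finset.range N).filter (fun k => k < i) = Finset.range i := by
        ext k; simp; omega
      rw [hset, Finset.card_range]
    rw [← hc, ← Finset.sum_add_distrib]
    refine Finset.sum_congr rfl fun k _ => ?_
    split_ifs with hk
    · have : t ≤ m k := hmono k ⟨i, hi⟩ (Fin.le_def.2 hk.le)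
      rw [max_eq_left (by linarith)]; ring
    · have : m k ≤ t := hmono ⟨i, hi⟩ k (Fin.le_def.2 (not_lt.1 hk))
      rw [max_eq_right (by linarith)]; ring
  · refine ⟨0, le_rfl, ?_⟩
    rw [mul_zero, zero_add]
    refine Finset.sum_congr rfl fun k _ => ?_
    rw [if_pos (by omega), sub_zero, max_eq_left (hnn k)]

lemma sum_halfVec {n : ℕ} (z : Fin n → ℝ) (f : ℝ → ℝ) :
    ∑ k, f (halfVec z k) = ∑ j, 2 * f (z j / 2) := by
  have h := Fintype.sum_equiv (finProdFinEquiv.trans (finCongr (Nat.mul_comm n 2)))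
    (fun x : Fin n × Fin 2 => f (z x.1 / 2)) (fun k => f (halfVec z k)) (by
      rintro ⟨a, b⟩
      have : ((b : ℕ) + 2 * a) / 2 = a := by omega
      simp [halfVec, this])
  rw [← h, Fintype.sum_prod_type]
  simp

/-- let `z ∈ P_n` and let `m ∈ P_N` be a probability vector whose components
can be partitioned into `n` groups of size at most 2 (via the fibers of `g`), the `j`-th
group summing to `z j`. Then `half(z) ≼ m`. -/
theorem half_maj_of_pair_partition {n N : ℕ} (z : Fin n → ℝ) (hz : IsProbVec z)
    (m : Fin N → ℝ) (hm : IsProbVec m) (g : Fin N → Fin n)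
    (hcard : ∀ j, (Finset.univ.filter (fun i => g i = j)).card ≤ 2)
    (hsum : ∀ j, (∑ i ∈ Finset.univ.filter (fun i => g i = j), m i) = z j) :
    Maj (halfVec z) m := by
  intro i
  obtain ⟨t, ht, hti⟩ := exists_prefSum_eq m hm i
  refine (prefSum_le (halfVec z) i ht).trans ?_
  rw [← hti, sum_halfVec z (fun x => max (x - t) 0),
    ← Finset.sum_fiberwise Finset.univ g (fun k => max (m k - t) 0)]
  gcongr with j
  have hnn : 0 ≤ ∑ k ∈ Finset.univ.filter (fun k => g k = j), max (m k - t) 0 :=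
    Finset.sum_nonneg fun k _ => le_max_right _ _
  have hge : z j - 2 * t ≤ ∑ k ∈ Finset.univ.filter (fun k => g k = j), max (m k - t) 0 := by
    have h1 : ∑ k ∈ Finset.univ.filter (fun k => g k = j), (m k - t) ≤
        ∑ k ∈ Finset.univ.filter (fun k => g k = j), max (m k - t) 0 :=
      Finset.sum_le_sum fun k _ => le_max_left _ _
    rw [Finset.sum_sub_distrib, hsum, Finset.sum_const, nsmul_eq_mul] at h1
    have h2 : ((Finset.univ.filter (fun k => g k = j)).card : ℝ) * t ≤ 2 * t :=
      mul_le_mul_of_nonneg_right (by exact_mod_cast hcard j) ht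
    linarith
  rcases max_cases (z j / 2 - t) 0 with h | h <;> rw [h.1] <;> linarith
end

section
/- Fix k probability distributions p^{(1)},…,p^{(k)} ∈ P_n. For any k-dimensional joint distribution M whose marginals are p^{(1)},…,p^{(k)}, it holds that H(M) ≥ H(p^{(1)} ∧ p^{(2)} ∧ ⋯ ∧ p^{(k)}). -/
/-!
Every set `S` of cells of `M` meets at most `|S|` values of the `j`-th coordinate, so its mass is
at most the sum of the `|S|` largest components of `p j` (`sum_joint_le_prefSum`). The pointwise
minimum over `j` of the prefix sums of the `p j` is concave, hence is the prefix-sum function of a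
common lower bound in `P_n` (`exists_prefSum_eq_inf`); since `z` dominates that bound, the mass of
`S` is at most the sum of the first `|S|` components of `z`. Thus the entries of `M`, once sorted,
are majorized by `z`.

Entropy reverses majorization (`entropy_le_of_maj`). Sorting `M` is avoided through the identity
`-x log x = ∫ t in 0..1, min x t / t - x` on `[0, 1]`: majorization gives
`∑ min (z i) t ≤ ∑ min (M v) t` for each level `t` (by considering the set of cells where `M`
exceeds `t`), and it remains to integrate.
-/

open Finset

/-- Shannon entropy (base-2 logarithm, with the convention `0 · log (1/0) = 0`). -/
noncomputable def H2 {n : ℕ} (p : Fin n → ℝ) : ℝ :=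
  ∑ i, -(p i * Real.logb 2 (p i))
/-- A `k`-dimensional joint distribution with marginals `p 1, …, p k ∈ P_n`. -/
def IsJointDist {n k : ℕ} (M : (Fin k → Fin n) → ℝ) (p : Fin k → Fin n → ℝ) : Prop :=
  (∀ v, 0 ≤ M v) ∧ (∑ v, M v) = 1 ∧
    ∀ (j : Fin k) (t : Fin n),
      (∑ v ∈ Finset.univ.filter (fun v : Fin k → Fin n => v j = t), M v) = p j t

/-- Shannon entropy (base 2) of the vector of entries of a `k`-dimensional array. -/
noncomputable def H2joint {n k : ℕ} (M : (Fin k → Fin n) → ℝ) : ℝ :=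
  ∑ v, -(M v * Real.logb 2 (M v))

lemma prefSum_of_ge {n : ℕ} (p : Fin n → ℝ) {i : ℕ} (h : n ≤ i) : prefSum p i = ∑ k, p k :=
  Finset.sum_congr rfl fun k _ => if_pos (k.2.trans_le h)

/-- Concavity of prefix sums of a distribution: the increments, extended by zero beyond `n`,
are non-increasing. -/
lemma prefSum_concave {n : ℕ} {p : Fin n → ℝ} (hp : IsProbVec p) (i : ℕ) :
    prefSum p (i + 2) + prefSum p i ≤ 2 * prefSum p (i + 1) := by
  rw [show i + 2 = i + 1 + 1 from rfl, prefSum_succ p (i + 1), prefSum_succ p i]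
  split_ifs with h1 h2 h2
  · have := hp.1 ⟨i, h1⟩ ⟨i + 1, h2⟩ (by simp)
    linarith
  · have := hp.2.1 ⟨i, h1⟩
    linarith
  · omega
  · linarith

lemma prefSum_le_succ {n : ℕ} {p : Fin n → ℝ} (hp : IsProbVec p) (i : ℕ) :
    prefSum p i ≤ prefSum p (i + 1) := by
  rw [prefSum_succ]
  split_ifs with h
  · linarith [hp.2.1 ⟨i, h⟩]
  · simp

/-- The first `s` components of a non-increasing nonnegative vector have the largest sum among
all choices of at most `s` components. -/
lemma sum_le_prefSum {n : ℕ} {p : Fin n → ℝ} (hp : IsProbVec p) (T : Finset (Fin n)) {s : ℕ}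
    (hT : T.card ≤ s) : ∑ t ∈ T, p t ≤ prefSum p s := by
  rcases le_or_gt n s with h | h
  · rw [prefSum_of_ge p h]
    exact Finset.sum_le_univ_sum_of_nonneg hp.2.1
  · -- With `c` the first component left out, `(p i - c) * (1_T i - 1_{i < s}) ≤ 0` pointwise.
    set c := p ⟨s, h⟩ with hc
    have hc0 : 0 ≤ c := hp.2.1 _
    have key : ∀ i : Fin n, (if i ∈ T then p i - c else 0) ≤ if (i : ℕ) < s then p i - c else 0 := by
      intro i
      rcases lt_or_ge (i : ℕ) s with his | his
      · have : c ≤ p i := hp.1 i ⟨s, h⟩ (by simpa [Fin.le_def] using his.le)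
        rw [if_pos his]
        split_ifs <;> linarith
      · have : p i ≤ c := hp.1 ⟨s, h⟩ i (by simpa [Fin.le_def] using his)
        rw [if_neg (not_lt.2 his)]
        split_ifs <;> linarith
    have hsum := Finset.sum_le_sum fun i (_ : i ∈ Finset.univ) => key i
    have hcard : (Finset.univ.filter fun i : Fin n => (i : ℕ) < s).card = s := by
      rw [Fin.card_filter_val_lt, min_eq_right h.le]
    have hl : ∑ i : Fin n, (if i ∈ T then p i - c else 0) = ∑ t ∈ T, p t - T.card * c := by
      rw [← Finset.sum_filter]
      simp [Finset.sum_sub_distrib]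
    have hr : ∑ i : Fin n, (if (i : ℕ) < s then p i - c else 0) = prefSum p s - s * c := by
      unfold prefSum
      rw [← Finset.sum_filter, ← Finset.sum_filter, Finset.sum_sub_distrib, Finset.sum_const,
        hcard, nsmul_eq_mul]
    have hTs : (T.card : ℝ) ≤ s := by exact_mod_cast hT
    nlinarith

/-! ### Realising the pointwise minimum of prefix sums -/

/-- A finite nonempty family in `P_n` has a common lower bound whose prefix sums are the pointwise
minima of theirs: a minimum of concave functions is concave, so its increments are sorted. -/
lemma exists_prefSum_eq_inf {ι : Type*} [Fintype ι] [Nonempty ι] {n : ℕ} (q : ι → Fin n → ℝ)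
    (hq : ∀ o, IsProbVec (q o)) :
    ∃ w : Fin n → ℝ, IsProbVec w ∧
      ∀ i, prefSum w i = Finset.univ.inf' Finset.univ_nonempty (fun o => prefSum (q o) i) := by
  set G : ℕ → ℝ := fun i => Finset.univ.inf' Finset.univ_nonempty (fun o => prefSum (q o) i)
    with hG
  have hGle : ∀ i o, G i ≤ prefSum (q o) i := fun i o => Finset.inf'_le _ (Finset.mem_univ o)
  have hGex : ∀ i, ∃ o, G i = prefSum (q o) i := by
    intro i
    obtain ⟨o, -, ho⟩ := Finset.exists_mem_eq_inf' (Finset.univ_nonempty (α := ι))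
      (fun o => prefSum (q o) i)
    exact ⟨o, ho⟩
  have hG0 : G 0 = 0 := by
    obtain ⟨o, ho⟩ := hGex 0
    rw [ho, prefSum_zero]
  have hGn : ∀ i, n ≤ i → G i = 1 := by
    intro i hi
    obtain ⟨o, ho⟩ := hGex i
    rw [ho, prefSum_of_ge _ hi, (hq o).2.2]
  have hanti : Antitone fun i => G (i + 1) - G i := by
    refine antitone_nat_of_succ_le fun i => ?_
    obtain ⟨o, ho⟩ := hGex (i + 1)
    have h1 := hGle (i + 2) o
    have h2 := hGle i o
    have h3 := prefSum_concave (hq o) i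
    show G (i + 2) - G (i + 1) ≤ G (i + 1) - G i
    linarith
  have hpref : ∀ i, prefSum (fun j : Fin n => G (j + 1) - G j) i = G i := by
    intro i
    induction i with
    | zero => rw [prefSum_zero, hG0]
    | succ i ih =>
      rw [prefSum_succ, ih]
      split_ifs with h
      · simp
      · rw [hGn i (by omega), hGn (i + 1) (by omega), add_zero]
  refine ⟨fun j => G (j + 1) - G j, ⟨fun i j hij => hanti (show (i : ℕ) ≤ j from hij), ?_, ?_⟩,
    hpref⟩
  · intro i
    obtain ⟨o, ho⟩ := hGex (i + 1)
    have h2 := hGle i o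
    have h3 := prefSum_le_succ (hq o) i
    show 0 ≤ G (i + 1) - G i
    linarith
  · rw [← prefSum_of_ge _ le_rfl, hpref, hGn n le_rfl]

/-! ### Entropy as an integral of truncations -/

/-- The truncation integrand is bounded by `1`, hence integrable despite the division by `t`. -/
lemma intervalIntegrable_min_div {x : ℝ} (hx : 0 ≤ x) :
    IntervalIntegrable (fun t : ℝ => min x t / t) MeasureTheory.volume 0 1 := by
  refine (intervalIntegrable_const (c := (1 : ℝ))).mono_fun
    (by fun_prop : Measurable fun t : ℝ => min x t / t).aestronglyMeasurable ?_
  refine (MeasureTheory.ae_restrict_mem measurableSet_uIoc).mono fun t ht => ?_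
  rw [Set.uIoc_of_le zero_le_one] at ht
  dsimp only
  rw [Real.norm_of_nonneg (div_nonneg (le_min hx ht.1.le) ht.1.le), norm_one,
    div_le_one ht.1]
  exact min_le_right _ _

/-- `-x log x` is, up to a linear term, a mixture of the truncations `x ↦ min x t`. -/
lemma integral_min_div {x : ℝ} (hx : 0 ≤ x) (hx1 : x ≤ 1) :
    ∫ t in (0 : ℝ)..1, min x t / t = x - x * Real.log x := by
  rcases hx.eq_or_lt with rfl | hx0
  · have : ∫ t in (0 : ℝ)..1, min 0 t / t = ∫ t in (0 : ℝ)..1, (0 : ℝ) := by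
      refine intervalIntegral.integral_congr fun t ht => ?_
      rw [Set.uIcc_of_le zero_le_one] at ht
      simp [min_eq_left ht.1]
    simp [this]
  · have hint := intervalIntegrable_min_div hx
    have hi1 : IntervalIntegrable (fun t : ℝ => min x t / t) MeasureTheory.volume 0 x :=
      hint.mono_set (by
        rw [Set.uIcc_of_le hx, Set.uIcc_of_le zero_le_one]
        exact Set.Icc_subset_Icc le_rfl hx1)
    have hi2 : IntervalIntegrable (fun t : ℝ => min x t / t) MeasureTheory.volume x 1 :=
      hint.mono_set (by
        rw [Set.uIcc_of_le hx1, Set.uIcc_of_le zero_le_one]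
        exact Set.Icc_subset_Icc hx le_rfl)
    rw [← intervalIntegral.integral_add_adjacent_intervals hi1 hi2]
    have e1 : ∫ t in (0 : ℝ)..x, min x t / t = ∫ t in (0 : ℝ)..x, (1 : ℝ) := by
      refine intervalIntegral.integral_congr_ae (Filter.Eventually.of_forall fun t ht => ?_)
      rw [Set.uIoc_of_le hx] at ht
      rw [min_eq_right ht.2, div_self ht.1.ne']
    have e2 : ∫ t in x..1, min x t / t = ∫ t in x..1, x * t⁻¹ := by
      refine intervalIntegral.integral_congr fun t ht => ?_
      rw [Set.uIcc_of_le hx1] at ht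
      simp only [min_eq_left ht.1, div_eq_mul_inv]
    rw [e1, e2, intervalIntegral.integral_const_mul, integral_inv_of_pos hx0 one_pos]
    simp [Real.log_inv]
    ring

lemma sum_negMulLogb_eq {V : Type*} [Fintype V] (f : V → ℝ) (h0 : ∀ v, 0 ≤ f v)
    (hs : ∑ v, f v = 1) :
    ∑ v, -(f v * Real.logb 2 (f v))
      = ((∫ t in (0 : ℝ)..1, ∑ v, min (f v) t / t) - 1) / Real.log 2 := by
  have h1 : ∀ v, f v ≤ 1 := fun v =>
    hs ▸ Finset.single_le_sum (fun i _ => h0 i) (Finset.mem_univ v)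
  rw [intervalIntegral.integral_finsetSum fun v _ => intervalIntegrable_min_div (h0 v),
    Finset.sum_congr rfl fun v _ => integral_min_div (h0 v) (h1 v), Finset.sum_sub_distrib, hs,
    sub_sub_cancel_left, ← Finset.sum_neg_distrib, Finset.sum_div]
  refine Finset.sum_congr rfl fun v _ => ?_
  rw [Real.logb]
  ring

/-! ### Majorization implies the entropy inequality -/

/-- If every set of `s` entries of `f` sums to at most the first `s` components of `z`, then
truncation at level `t` keeps more mass of `f` than of `z`. -/
lemma sum_min_le {V : Type*} [Fintype V] {n : ℕ} (f : V → ℝ) (z : Fin n → ℝ)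
    (hf : ∑ v, f v = 1) (hz : ∑ i, z i = 1)
    (hmaj : ∀ S : Finset V, ∑ v ∈ S, f v ≤ prefSum z S.card) {t : ℝ} (ht : 0 ≤ t) :
    ∑ i, min (z i) t ≤ ∑ v, min (f v) t := by
  -- The mass of `f` above level `t` sits on the superlevel set `S`, where `hmaj` applies.
  set S : Finset V := Finset.univ.filter fun v => t < f v with hS
  have e1 : ∑ v, min (f v) t = 1 - (∑ v ∈ S, f v - S.card * t) := by
    have : ∑ v ∈ S, f v - S.card * t = ∑ v, if t < f v then f v - t else 0 := by
      rw [← Finset.sum_filter, Finset.sum_sub_distrib, Finset.sum_const, nsmul_eq_mul]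
    rw [this, ← hf, ← Finset.sum_sub_distrib]
    refine Finset.sum_congr rfl fun v _ => ?_
    split_ifs with h
    · rw [min_eq_right h.le]; ring
    · rw [min_eq_left (not_lt.1 h)]; ring
  have e2 : ∑ i, min (z i) t ≤ 1 - (prefSum z S.card - S.card * t) := by
    have hcard : ((Finset.univ.filter fun i : Fin n => (i : ℕ) < S.card).card : ℝ) ≤ S.card := by
      rw [Fin.card_filter_val_lt]
      exact_mod_cast min_le_right _ _
    have h1 : ∑ i : Fin n, (if (i : ℕ) < S.card then z i - t else 0)
        = prefSum z S.card
          - (Finset.univ.filter fun i : Fin n => (i : ℕ) < S.card).card * t := by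
      unfold prefSum
      rw [← Finset.sum_filter, ← Finset.sum_filter, Finset.sum_sub_distrib, Finset.sum_const,
        nsmul_eq_mul]
    have h2 : ∑ i, min (z i) t
        ≤ ∑ i : Fin n, (z i - if (i : ℕ) < S.card then z i - t else 0) := by
      refine Finset.sum_le_sum fun i _ => ?_
      split_ifs
      · simp
      · simp
    rw [Finset.sum_sub_distrib, hz, h1] at h2
    nlinarith
  linarith [hmaj S]

/-- Schur concavity of the entropy, for vectors indexed by different types. -/
lemma entropy_le_of_maj {V : Type*} [Fintype V] {n : ℕ} (f : V → ℝ) (z : Fin n → ℝ)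
    (hf0 : ∀ v, 0 ≤ f v) (hf : ∑ v, f v = 1) (hz0 : ∀ i, 0 ≤ z i) (hz : ∑ i, z i = 1)
    (hmaj : ∀ S : Finset V, ∑ v ∈ S, f v ≤ prefSum z S.card) :
    ∑ i, -(z i * Real.logb 2 (z i)) ≤ ∑ v, -(f v * Real.logb 2 (f v)) := by
  rw [sum_negMulLogb_eq f hf0 hf, sum_negMulLogb_eq z hz0 hz]
  refine div_le_div_of_nonneg_right (sub_le_sub_right ?_ _) (Real.log_nonneg one_le_two)
  refine intervalIntegral.integral_mono_on zero_le_one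
    (by simpa only [Finset.sum_fn] using
      IntervalIntegrable.sum Finset.univ fun i _ => intervalIntegrable_min_div (hz0 i))
    (by simpa only [Finset.sum_fn] using
      IntervalIntegrable.sum Finset.univ fun v _ => intervalIntegrable_min_div (hf0 v))
    fun t ht => ?_
  rw [← Finset.sum_div, ← Finset.sum_div]
  exact div_le_div_of_nonneg_right (sum_min_le f z hf hz hmaj ht.1) ht.1

/-! ### Joint distributions -/

/-- A set of cells of the array projects to at most as many values of coordinate `j`, so its mass
is at most that of the largest components of the `j`-th marginal. -/
lemma sum_joint_le_prefSum {n k : ℕ} {p : Fin k → Fin n → ℝ} (hp : ∀ j, IsProbVec (p j))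
    {M : (Fin k → Fin n) → ℝ} (hM : IsJointDist M p) (j : Fin k) (S : Finset (Fin k → Fin n)) :
    ∑ v ∈ S, M v ≤ prefSum (p j) S.card := by
  refine le_trans ?_ (sum_le_prefSum (hp j) (S.image fun v => v j) Finset.card_image_le)
  have hfib : ∑ t ∈ S.image (fun v => v j), ∑ v ∈ S with v j = t, M v = ∑ v ∈ S, M v :=
    Finset.sum_fiberwise_of_maps_to (fun v hv => Finset.mem_image_of_mem (fun v => v j) hv) M
  rw [← hfib]
  refine Finset.sum_le_sum fun t _ => ?_
  rw [← hM.2.2 j t]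
  exact Finset.sum_le_sum_of_subset_of_nonneg
    (Finset.filter_subset_filter _ (Finset.subset_univ S)) fun v _ _ => hM.1 v

/-- The point mass on the first component, the greatest element of `P_n` for `n ≥ 1`. -/
def topVec (n : ℕ) : Fin n → ℝ := fun i => if (i : ℕ) = 0 then 1 else 0

lemma isProbVec_topVec {n : ℕ} (hn : 0 < n) : IsProbVec (topVec n) := by
  refine ⟨fun i j hij => ?_, fun i => ?_, ?_⟩
  · have : (i : ℕ) ≤ j := hij
    unfold topVec
    split_ifs <;> first | omega | norm_num
  · unfold topVec
    split_ifs <;> norm_num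
  · rw [Finset.sum_eq_single (⟨0, hn⟩ : Fin n)]
    · simp [topVec]
    · intro b _ hb
      exact if_neg fun h => hb (Fin.ext h)
    · simp

lemma prefSum_topVec_succ {n : ℕ} (hn : 0 < n) (s : ℕ) : prefSum (topVec n) (s + 1) = 1 := by
  induction s with
  | zero => rw [prefSum_succ, prefSum_zero]; simp [topVec, hn]
  | succ s ih => rw [prefSum_succ, ih]; simp [topVec]

/-- fix `p 1, …, p k ∈ P_n` and let `z = p 1 ∧ p 2 ∧ ⋯ ∧ p k` be their greatest
lower bound in `(P_n, ≼)`. For any `k`-dimensional joint distribution `M` with marginals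
`p 1, …, p k`, it holds that `H(M) ≥ H(z)`. -/
theorem joint_entropy_ge_glb {n k : ℕ} (p : Fin k → Fin n → ℝ) (hp : ∀ j, IsProbVec (p j))
    (z : Fin n → ℝ) (hz : IsProbVec z) (hzle : ∀ j, Maj z (p j))
    (hzglb : ∀ w : Fin n → ℝ, IsProbVec w → (∀ j, Maj w (p j)) → Maj w z)
    (M : (Fin k → Fin n) → ℝ) (hM : IsJointDist M p) :
    H2joint M ≥ H2 z := by
  have hn : 0 < n := by
    rcases Nat.eq_zero_or_pos n with rfl | h
    · simpa using hz.2.2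
    · exact h
  refine entropy_le_of_maj M z hM.1 hM.2.1 hz.2.1 hz.2.2 fun S => ?_
  -- Adjoining the greatest element of `P_n` keeps the family nonempty when `k = 0`.
  obtain ⟨w, hw, hwpref⟩ := exists_prefSum_eq_inf
    (fun o : Option (Fin k) => o.elim (topVec n) p)
    (by rintro (_ | j); exacts [isProbVec_topVec hn, hp j])
  have hwz : Maj w z := hzglb w hw fun j i => by
    rw [hwpref]
    exact Finset.inf'_le (fun o : Option (Fin k) => prefSum (o.elim (topVec n) p) i)
      (Finset.mem_univ (some j))
  refine le_trans ?_ (hwz S.card)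
  rw [hwpref]
  refine Finset.le_inf' _ _ ?_
  rintro (_ | j) -
  · show ∑ v ∈ S, M v ≤ prefSum (topVec n) S.card
    rcases S.eq_empty_or_nonempty with rfl | hS
    · simp [prefSum_zero]
    · obtain ⟨s, hs⟩ := Nat.exists_eq_succ_of_ne_zero hS.card_pos.ne'
      rw [hs, Nat.succ_eq_add_one, prefSum_topVec_succ hn, ← hM.2.1]
      exact Finset.sum_le_univ_sum_of_nonneg hM.1
  · exact sum_joint_le_prefSum hp hM j S
end
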